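/- Let c ∈ (0,1), let p ∈ (0,1), and let (a_n)_{n≥0} be a decreasing summable sequence of positive reals satisfying ∑_{j>k} a_j ≤ (1-c) a_k for all k ≥ 0. Let u be the smooth function obtained as uniform limit of u_n = H_{a_0} * ⋯ * H_{a_n}. Then for every n ≥ 0, ‖u^{(n)}‖_p ≤ (2-c)^{1/p} · 2^{n/p} · a_n^{1/p} / (a_0 a_1 ⋯ a_n); equivalently, ∫_ℝ |u^{(n)}|^p dx ≤ (2-c) · 2^n a_n / (a_0 a_1 ⋯ a_n)^p. -/

import Mathlib

open Real MeasureTheory Filter Set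

noncomputable def pNorm (p : ℝ) (f : ℝ → ℝ) : ℝ := (∫ x : ℝ, |f x| ^ p) ^ (1 / p)

noncomputable def supNorm (f : ℝ → ℝ) : ℝ := ⨆ x : ℝ, |f x|

def MemLp' (p : ℝ) (f : ℝ → ℝ) : Prop := MeasureTheory.Integrable (fun x : ℝ => |f x| ^ p)

def BddFun (f : ℝ → ℝ) : Prop := ∃ C : ℝ, ∀ x, |f x| ≤ C

noncomputable def MNorm (p : ℝ) (M : ℕ → ℝ) (f : ℝ → ℝ) : ℝ :=
  ⨆ k : ℕ, pNorm p (iteratedDeriv k f) / M k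

/-- The class `S`: smooth functions whose derivatives are all bounded and in `L^p`,
with finite Carleman–Sobolev quasi-norm, and `limsup ‖f^(k)‖_∞ ^ (q^k) ≤ 1`. -/
def MemS (p q : ℝ) (M : ℕ → ℝ) (f : ℝ → ℝ) : Prop :=
  ContDiff ℝ (⊤ : ℕ∞) f ∧
  (∀ k, BddFun (iteratedDeriv k f) ∧ MemLp' p (iteratedDeriv k f)) ∧
  BddAbove (Set.range fun k : ℕ => pNorm p (iteratedDeriv k f) / M k) ∧
  Filter.limsup (fun k : ℕ => supNorm (iteratedDeriv k f) ^ (q ^ k)) Filter.atTop ≤ 1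

/-- `μ_M = ∏_{k=1}^∞ M_k ^ (p q^(k-1))`, as a `tprod`. -/
noncomputable def muProd (p q : ℝ) (M : ℕ → ℝ) : ℝ := ∏' k : ℕ, M (k + 1) ^ (p * q ^ k)

/-- Convergence of the product `μ_M`. -/
def MuFinite (p q : ℝ) (M : ℕ → ℝ) : Prop := Multipliable fun k : ℕ => M (k + 1) ^ (p * q ^ k)

/-- `H_a = (1/a) · χ_{[0,a]}`. -/
noncomputable def Hfun (a : ℝ) : ℝ → ℝ := Set.indicator (Set.Icc 0 a) fun _ => 1 / a

/-- Convolution of real functions on `ℝ`. -/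
noncomputable def convFun (f g : ℝ → ℝ) : ℝ → ℝ := fun x => ∫ t : ℝ, f t * g (x - t)

/-- `u_n = H_{a_0} * H_{a_1} * ⋯ * H_{a_n}`. -/
noncomputable def uSeq (a : ℕ → ℝ) : ℕ → ℝ → ℝ
  | 0 => Hfun (a 0)
  | n + 1 => convFun (uSeq a n) (Hfun (a (n + 1)))

/-- The separation condition `∑_{j>k} a_j ≤ (1-c) a_k` for all `k`. -/
def SepCond (c : ℝ) (a : ℕ → ℝ) : Prop := ∀ k : ℕ, ∑' j : ℕ, a (k + 1 + j) ≤ (1 - c) * a k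

/-- Averaging operator. -/
noncomputable def avgOp (b : ℝ) (f : ℝ → ℝ) : ℝ → ℝ := fun x => (1 / b) * ∫ s in (0:ℝ)..b, f (x - s)

lemma convFun_Hfun (b : ℝ) (hb : 0 < b) (f : ℝ → ℝ) : convFun f (Hfun b) = avgOp b f := by
  funext x
  unfold convFun avgOp
  rw [intervalIntegral.integral_comp_sub_left (fun t => f t) x, sub_zero,
    intervalIntegral.integral_of_le (by linarith), ← integral_Icc_eq_integral_Ioc,
    ← integral_const_mul, ← integral_indicator measurableSet_Icc]
  congr 1
  funext t
  unfold Hfun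
  by_cases h : x - t ∈ Set.Icc 0 b
  · have h' : t ∈ Set.Icc (x - b) x := ⟨by linarith [h.2], by linarith [h.1]⟩
    rw [Set.indicator_of_mem h, Set.indicator_of_mem h']; ring
  · have h' : t ∉ Set.Icc (x - b) x := fun h' => h ⟨by linarith [h'.2], by linarith [h'.1]⟩
    rw [Set.indicator_of_notMem h, Set.indicator_of_notMem h']; ring

lemma ii_of_bdd {f : ℝ → ℝ} (hf : Measurable f) {C : ℝ} (hC : ∀ x, |f x| ≤ C) (s t : ℝ) :
    IntervalIntegrable f volume s t := by
  refine (intervalIntegrable_const (c := C)).mono_fun hf.aestronglyMeasurable ?_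
  filter_upwards with x
  rw [Real.norm_eq_abs, Real.norm_eq_abs]
  exact (hC x).trans (le_abs_self C)

lemma avgOp_abs_le (b : ℝ) (hb : 0 < b) {f : ℝ → ℝ} {C : ℝ} (x : ℝ)
    (hC : ∀ s, |f (x - s)| ≤ C) : |avgOp b f x| ≤ C := by
  unfold avgOp
  have h := intervalIntegral.norm_integral_le_of_norm_le_const (a := 0) (b := b)
    (f := fun s => f (x - s)) (C := C) (fun s _ => hC s)
  rw [Real.norm_eq_abs, sub_zero, abs_of_pos hb] at h
  rw [abs_mul, abs_of_pos (by positivity : 0 < 1 / b)]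
  calc 1 / b * _ ≤ 1 / b * (C * b) := by gcongr
    _ = C := by field_simp

lemma avgOp_eq (b : ℝ) (f : ℝ → ℝ) (x : ℝ) :
    avgOp b f x = (1 / b) * ∫ t in (x - b)..x, f t := by
  unfold avgOp
  rw [intervalIntegral.integral_comp_sub_left (fun t => f t) x, sub_zero]

lemma avgOp_lip (b : ℝ) (hb : 0 < b) {f : ℝ → ℝ} (hf : Measurable f) {C : ℝ}
    (hC : ∀ x, |f x| ≤ C) (x y : ℝ) : |avgOp b f x - avgOp b f y| ≤ (2 * C / b) * |x - y| := by
  rw [avgOp_eq, avgOp_eq]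
  have e : (∫ t in (x - b)..x, f t) - (∫ t in (y - b)..y, f t)
      = (∫ t in y..x, f t) - ∫ t in (y-b)..(x-b), f t := by
    have h1 := intervalIntegral.integral_add_adjacent_intervals (ii_of_bdd hf hC (y-b) (x-b))
      (ii_of_bdd hf hC (x-b) x)
    have h2 := intervalIntegral.integral_add_adjacent_intervals (ii_of_bdd hf hC (y-b) y)
      (ii_of_bdd hf hC y x)
    linarith
  rw [← mul_sub, e, abs_mul, abs_of_pos (by positivity : 0 < 1 / b)]
  have h1 := intervalIntegral.norm_integral_le_of_norm_le_const (a := y) (b := x)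
    (f := f) (C := C) (fun s _ => hC s)
  have h2 := intervalIntegral.norm_integral_le_of_norm_le_const (a := y - b) (b := x - b)
    (f := f) (C := C) (fun s _ => hC s)
  rw [Real.norm_eq_abs] at h1 h2
  rw [show x - b - (y - b) = x - y by ring] at h2
  have h3 := abs_sub (∫ t in y..x, f t) (∫ t in (y-b)..(x-b), f t)
  calc 1 / b * _ ≤ 1 / b * (C * |x - y| + C * |x - y|) := by gcongr; linarith
    _ = _ := by ring

lemma continuous_of_lip {f : ℝ → ℝ} {L : ℝ} (h : ∀ x y, |f x - f y| ≤ L * |x - y|) :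
    Continuous f := by
  refine (LipschitzWith.of_dist_le_mul (K := L.toNNReal) ?_).continuous
  intro x y
  rw [Real.dist_eq, Real.dist_eq]
  refine (h x y).trans ?_
  gcongr
  exact Real.le_coe_toNNReal L

lemma avgOp_comm (b d : ℝ) {f : ℝ → ℝ} (hf : Measurable f) {C : ℝ}
    (hC : ∀ x, |f x| ≤ C) : avgOp b (avgOp d f) = avgOp d (avgOp b f) := by
  funext x
  unfold avgOp
  rw [intervalIntegral.integral_const_mul, intervalIntegral.integral_const_mul,
    intervalIntegral_intervalIntegral_swap (F := fun s t => f (x - s - t))]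
  · simp only [sub_right_comm]
    ring
  · have : IsFiniteMeasure ((volume.restrict (Set.uIoc 0 b)).prod (volume.restrict (Set.uIoc 0 d))) := by
      unfold Set.uIoc; infer_instance
    have hm : Measurable (Function.uncurry fun s t => f (x - s - t)) :=
      hf.comp (by fun_prop)
    have hfin : Integrable (Function.uncurry fun s t => f (x - s - t))
        ((volume.restrict (Set.uIoc 0 b)).prod (volume.restrict (Set.uIoc 0 d))) :=
      Integrable.of_bound hm.aestronglyMeasurable C (Eventually.of_forall fun z => hC _)
    simpa [IntegrableOn, Measure.prod_restrict, Measure.volume_eq_prod] using hfin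

lemma uSeq_zero (a : ℕ → ℝ) : uSeq a 0 = Hfun (a 0) := rfl

lemma uSeq_succ (a : ℕ → ℝ) (ha : ∀ n, 0 < a n) (n : ℕ) :
    uSeq a (n + 1) = avgOp (a (n+1)) (uSeq a n) := by
  rw [← convFun_Hfun _ (ha _)]; rfl

lemma Hfun_abs_le (b : ℝ) (hb : 0 < b) (x : ℝ) : |Hfun b x| ≤ 1 / b := by
  unfold Hfun
  by_cases h : x ∈ Set.Icc 0 b
  · rw [Set.indicator_of_mem h, abs_of_pos (by positivity)]
  · rw [Set.indicator_of_notMem h, abs_zero]; positivity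

lemma measurable_Hfun (b : ℝ) : Measurable (Hfun b) :=
  measurable_const.indicator measurableSet_Icc

lemma uSeq_basic (a : ℕ → ℝ) (ha : ∀ n, 0 < a n) (n : ℕ) :
    Measurable (uSeq a n) ∧ ∀ x, |uSeq a n x| ≤ 1 / a 0 := by
  induction n with
  | zero => exact ⟨measurable_Hfun _, Hfun_abs_le _ (ha 0)⟩
  | succ n ih =>
    rw [uSeq_succ a ha]
    exact ⟨(continuous_of_lip (avgOp_lip _ (ha _) ih.1 ih.2)).measurable,
      fun x => avgOp_abs_le _ (ha _) x fun s => ih.2 _⟩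

lemma avgOp_sub_abs_le (b : ℝ) (hb : 0 < b) {f g : ℝ → ℝ} {D : ℝ} (x y : ℝ)
    (hf : Continuous f) (hg : Continuous g)
    (hD : ∀ s ∈ Set.Ioc 0 b, |f (x - s) - g (y - s)| ≤ D) : |avgOp b f x - avgOp b g y| ≤ D := by
  unfold avgOp
  rw [← mul_sub, ← intervalIntegral.integral_sub]
  · have h := intervalIntegral.norm_integral_le_of_norm_le_const (a := 0) (b := b)
      (f := fun s => f (x - s) - g (y - s)) (C := D)
      (fun s hs => hD s (by rwa [Set.uIoc_of_le hb.le] at hs))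
    rw [Real.norm_eq_abs, sub_zero, abs_of_pos hb] at h
    rw [abs_mul, abs_of_pos (by positivity : 0 < 1 / b)]
    calc 1 / b * _ ≤ 1 / b * (D * b) := by gcongr
      _ = D := by field_simp
  · exact (hf.comp (by fun_prop)).intervalIntegrable _ _
  · exact (hg.comp (by fun_prop)).intervalIntegrable _ _

lemma avgOp_sub_self (b : ℝ) (hb : 0 < b) {f : ℝ → ℝ} {L : ℝ} (hL : 0 ≤ L)
    (h : ∀ x y, |f x - f y| ≤ L * |x - y|) (x : ℝ) : |avgOp b f x - f x| ≤ L * b := by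
  have e : f x = avgOp b (fun _ => f x) x := by
    unfold avgOp
    simp only [intervalIntegral.integral_const, smul_eq_mul, sub_zero]
    field_simp
  rw [e]
  refine avgOp_sub_abs_le b hb x x (continuous_of_lip h) continuous_const fun s hs => ?_
  refine (h _ _).trans ?_
  gcongr
  rw [show x - s - x = -s by ring, abs_neg, abs_of_pos hs.1]
  exact hs.2

lemma uSeq_lip (a : ℕ → ℝ) (ha : ∀ n, 0 < a n) :
    ∃ L : ℝ, 0 ≤ L ∧ ∀ n x y, |uSeq a (n+1) x - uSeq a (n+1) y| ≤ L * |x - y| := by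
  have h0 := ha 0
  have h1 := ha 1
  refine ⟨2 * (1 / a 0) / a 1, by positivity, fun n => ?_⟩
  induction n with
  | zero =>
    rw [uSeq_succ a ha]
    exact avgOp_lip _ (ha _) (uSeq_basic a ha 0).1 (uSeq_basic a ha 0).2
  | succ n ih =>
    intro x y
    rw [uSeq_succ a ha]
    refine avgOp_sub_abs_le _ (ha _) x y (continuous_of_lip ih) (continuous_of_lip ih) fun s _ => ?_
    have := ih (x - s) (y - s)
    rwa [sub_sub_sub_cancel_right] at this

lemma uSeq_tendsto (a : ℕ → ℝ) (ha : ∀ n, 0 < a n) (hsum : Summable a) :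
    ∃ v : ℝ → ℝ, ∀ x, Tendsto (fun n => uSeq a n x) atTop (nhds (v x)) := by
  obtain ⟨L, hL, h⟩ := uSeq_lip a ha
  have : ∀ x, ∃ l, Tendsto (fun n => uSeq a n x) atTop (nhds l) := by
    intro x
    have hc : CauchySeq (fun n => uSeq a (n+1) x) := by
      refine cauchySeq_of_dist_le_of_summable (fun n => L * a (n + 2)) (fun n => ?_)
        (((summable_nat_add_iff 2).2 hsum).mul_left L)
      rw [dist_comm, Real.dist_eq, uSeq_succ a ha (n+1)]
      exact avgOp_sub_self _ (ha _) hL (h n) x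
    obtain ⟨l, hl⟩ := cauchySeq_tendsto_of_complete hc
    exact ⟨l, (tendsto_add_atTop_iff_nat (f := fun n => uSeq a n x) 1).1 hl⟩
  choose v hv using this
  exact ⟨v, hv⟩

lemma avgOp_Hfun_comm (b d : ℝ) (hb : 0 < b) (hd : 0 < d) :
    avgOp b (Hfun d) = avgOp d (Hfun b) := by
  rw [← convFun_Hfun b hb, ← convFun_Hfun d hd]
  funext x
  unfold convFun
  rw [← integral_sub_left_eq_self (fun t => Hfun d t * Hfun b (x - t)) volume x]
  congr 1
  funext t
  rw [sub_sub_cancel, mul_comm]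

lemma uSeq_shift (a : ℕ → ℝ) (ha : ∀ n, 0 < a n) (n : ℕ) :
    uSeq a (n + 1) = avgOp (a 0) (uSeq (fun k => a (k + 1)) n) := by
  induction n with
  | zero =>
    rw [uSeq_succ a ha, uSeq_zero, uSeq_zero]
    exact avgOp_Hfun_comm _ _ (ha _) (ha _)
  | succ n ih =>
    have hb := uSeq_basic (fun k => a (k + 1)) (fun n => ha _) n
    rw [uSeq_succ a ha, ih, uSeq_succ (fun k => a (k + 1)) (fun n => ha _),
      avgOp_comm _ _ hb.1 hb.2]

lemma uSeq_supp (a : ℕ → ℝ) (ha : ∀ n, 0 < a n) (n : ℕ) (x : ℝ)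
    (hx : x ∉ Set.Icc 0 (∑ i ∈ Finset.range (n+1), a i)) : uSeq a n x = 0 := by
  induction n generalizing x with
  | zero =>
    rw [uSeq_zero]; unfold Hfun
    simp only [zero_add, Finset.range_one, Finset.sum_singleton] at hx
    exact Set.indicator_of_notMem hx _
  | succ n ih =>
    rw [uSeq_succ a ha]; unfold avgOp
    rw [intervalIntegral.integral_congr (g := fun _ => 0)]
    · simp
    · intro s hs
      rw [Set.uIcc_of_le (ha _).le] at hs
      refine ih _ fun h => hx ?_
      rw [Finset.sum_range_succ]
      exact ⟨by linarith [h.1, hs.1], by linarith [h.2, hs.2]⟩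

lemma uLim_eq (a : ℕ → ℝ) (ha : ∀ n, 0 < a n) (u v : ℝ → ℝ)
    (hu : ∀ x, Tendsto (fun n => uSeq a n x) atTop (nhds (u x)))
    (hv : ∀ x, Tendsto (fun n => uSeq (fun k => a (k + 1)) n x) atTop (nhds (v x))) :
    u = avgOp (a 0) v := by
  funext x
  refine tendsto_nhds_unique ((tendsto_add_atTop_iff_nat 1).2 (hu x)) ?_
  simp only [uSeq_shift a ha]
  unfold avgOp
  refine Tendsto.const_mul _ ?_
  have hb := uSeq_basic (fun k => a (k + 1)) (fun n => ha _)
  refine intervalIntegral.tendsto_integral_filter_of_dominated_convergence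
    (fun _ => 1 / a (0+1)) ?_ ?_ ?_ ?_
  · filter_upwards with n
    exact ((hb n).1.comp (by fun_prop)).aestronglyMeasurable
  · filter_upwards with n
    filter_upwards with s _
    exact (hb n).2 _
  · exact intervalIntegrable_const
  · filter_upwards with s _
    exact hv _

lemma lim_cont (a : ℕ → ℝ) (ha : ∀ n, 0 < a n) (u : ℝ → ℝ)
    (hu : ∀ x, Tendsto (fun n => uSeq a n x) atTop (nhds (u x))) : Continuous u := by
  obtain ⟨L, hL, h⟩ := uSeq_lip a ha
  refine continuous_of_lip (L := L) fun x y => ?_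
  have h1 := ((tendsto_add_atTop_iff_nat 1).2 (hu x)).sub ((tendsto_add_atTop_iff_nat 1).2 (hu y))
  exact le_of_tendsto h1.abs (Eventually.of_forall fun n => h n x y)

lemma lim_deriv (b : ℝ) (v : ℝ → ℝ) (hv : Continuous v) (x : ℝ) :
    HasDerivAt (avgOp b v) ((1 / b) * (v x - v (x - b))) x := by
  have e : avgOp b v = fun x => (1 / b) * ((∫ t in (0:ℝ)..x, v t) - ∫ t in (0:ℝ)..(x - b), v t) := by
    funext y
    rw [avgOp_eq, intervalIntegral.integral_interval_sub_left
      (hv.intervalIntegrable _ _) (hv.intervalIntegrable _ _)]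
  rw [e]
  have h := fun y => intervalIntegral.integral_hasDerivAt_right (hv.intervalIntegrable 0 y)
    hv.aestronglyMeasurable.stronglyMeasurableAtFilter hv.continuousAt
  have h2 : HasDerivAt (fun x => ∫ t in (0:ℝ)..(x - b), v t) (v (x - b)) x :=
    HasDerivAt.comp_sub_const x b (h (x - b))
  exact ((h x).sub h2).const_mul _

lemma main_aux (c p : ℝ) (hc : c ∈ Set.Ioo (0:ℝ) 1) (hp : p ∈ Set.Ioo (0:ℝ) 1) (n : ℕ) :
    ∀ (a : ℕ → ℝ) (_ : ∀ n, 0 < a n) (_ : Summable a) (_ : SepCond c a)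
    (u : ℝ → ℝ) (_ : ∀ x, Tendsto (fun n => uSeq a n x) atTop (nhds (u x))),
    ContDiff ℝ n u ∧ Integrable (fun x => |iteratedDeriv n u x| ^ p) ∧
    ∫ x : ℝ, |iteratedDeriv n u x| ^ p ≤
      (2 - c) * 2 ^ n * a n / (∏ i ∈ Finset.range (n + 1), a i) ^ p := by
  have hp0 := hp.1
  induction n with
  | zero =>
    intro a ha hsum hsep u hu
    have hcont := lim_cont a ha u hu
    have h0 := ha 0
    set S := (2 - c) * a 0 with hS
    have hSpos : 0 < S := mul_pos (by linarith [hc.2]) h0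
    have hpart : ∀ n, ∑ i ∈ Finset.range (n+1), a i ≤ S := by
      intro n
      have h1 := hsum.sum_le_tsum (Finset.range (n+1)) (fun i _ => (ha i).le)
      have h2 := hsum.tsum_eq_zero_add
      have h3 := hsep 0
      simp only [zero_add, add_comm 1] at h3
      rw [hS]
      linarith
    have hbd : ∀ x, |u x| ≤ 1 / a 0 := fun x =>
      le_of_tendsto (hu x).abs (Eventually.of_forall fun n => (uSeq_basic a ha n).2 x)
    have hsupp : ∀ x, x ∉ Set.Icc 0 S → u x = 0 := fun x hx =>
      tendsto_nhds_unique (hu x) (tendsto_const_nhds.congr fun n =>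
        (uSeq_supp a ha n x fun h => hx ⟨h.1, h.2.trans (hpart n)⟩).symm)
    have hle : ∀ x, |u x| ^ p ≤ Set.indicator (Set.Icc 0 S) (fun _ => (1 / a 0) ^ p) x := by
      intro x
      by_cases hx : x ∈ Set.Icc 0 S
      · rw [Set.indicator_of_mem hx]
        exact Real.rpow_le_rpow (abs_nonneg _) (hbd x) hp0.le
      · rw [Set.indicator_of_notMem hx, hsupp x hx, abs_zero, Real.zero_rpow hp0.ne']
    have hint : Integrable (Set.indicator (Set.Icc 0 S) (fun _ => (1 / a 0) ^ p)) :=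
      (integrable_indicator_iff measurableSet_Icc).2 (integrableOn_const (by simp))
    have hi : Integrable (fun x => |u x| ^ p) := by
      refine hint.mono' (hcont.abs.rpow_const fun _ => Or.inr hp0.le).aestronglyMeasurable ?_
      filter_upwards with x
      rw [Real.norm_eq_abs, abs_of_nonneg (by positivity)]
      exact hle x
    simp only [iteratedDeriv_zero]
    refine ⟨contDiff_zero.2 hcont, hi, (integral_mono hi hint hle).trans ?_⟩
    rw [integral_indicator measurableSet_Icc, setIntegral_const]
    simp only [Measure.real, Real.volume_Icc, sub_zero, ENNReal.toReal_ofReal hSpos.le]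
    rw [Real.div_rpow zero_le_one h0.le, Real.one_rpow]
    simp [hS, div_eq_mul_inv]
  | succ n ih =>
    intro a ha hsum hsep u hu
    have h0 := ha 0
    set a' : ℕ → ℝ := fun k => a (k+1) with ha'
    have hsum' : Summable a' := (summable_nat_add_iff 1).2 hsum
    have hsep' : SepCond c a' := by
      intro k
      have := hsep (k+1)
      simp only [ha']
      have e : ∀ j, k + 1 + j + 1 = k + 1 + 1 + j := fun j => by ring
      simp only [e]
      exact this
    obtain ⟨v, hv⟩ := uSeq_tendsto a' (fun n => ha _) hsum'
    have hvc := lim_cont a' (fun n => ha _) v hv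
    obtain ⟨ihc, ihi, ihb⟩ := ih a' (fun n => ha _) hsum' hsep' v hv
    have hue := uLim_eq a ha u v hu hv
    have hd : ∀ x, HasDerivAt u ((1 / a 0) * (v x - v (x - a 0))) x := by
      rw [hue]; exact lim_deriv _ v hvc
    have hderiv : deriv u = fun x => (1 / a 0) * (v x - v (x - a 0)) := funext fun x => (hd x).deriv
    have ihc2 : ContDiff ℝ n (fun x => v (x - a 0)) := ihc.comp (by fun_prop)
    have hcd : ContDiff ℝ ((n : ℕ) + 1 : ℕ) u := by
      push_cast
      rw [contDiff_succ_iff_deriv]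
      refine ⟨fun x => (hd x).differentiableAt, by simp, ?_⟩
      rw [hderiv]
      exact contDiff_const.mul (ihc.sub ihc2)
    have hit : ∀ x, iteratedDeriv (n+1) u x
        = (1 / a 0) * (iteratedDeriv n v x - iteratedDeriv n v (x - a 0)) := by
      intro x
      rw [iteratedDeriv_succ', hderiv, iteratedDeriv_const_mul_field, iteratedDeriv_fun_sub
        ihc.contDiffAt ihc2.contDiffAt, iteratedDeriv_comp_sub_const]
    have hsub : ∀ x, |iteratedDeriv (n+1) u x| ^ p ≤ (1 / a 0 ^ p) *
        (|iteratedDeriv n v x| ^ p + |iteratedDeriv n v (x - a 0)| ^ p) := by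
      intro x
      rw [hit, abs_mul, abs_of_pos (by positivity : 0 < 1 / a 0),
        Real.mul_rpow (by positivity) (abs_nonneg _), Real.div_rpow zero_le_one h0.le,
        Real.one_rpow]
      gcongr
      refine (Real.rpow_le_rpow (abs_nonneg _) (abs_sub _ _) hp0.le).trans ?_
      exact Real.rpow_add_le_add_rpow (abs_nonneg _) (abs_nonneg _) hp0.le hp.2.le
    have ihi2 : Integrable (fun x => |iteratedDeriv n v (x - a 0)| ^ p) :=
      ihi.comp_sub_right (a 0)
    have hint := (ihi.add ihi2).const_mul (1 / a 0 ^ p)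
    have hcont : Continuous (iteratedDeriv (n+1) u) :=
      hcd.continuous_iteratedDeriv (n+1) le_rfl
    have hi : Integrable (fun x => |iteratedDeriv (n+1) u x| ^ p) := by
      refine hint.mono' (hcont.abs.rpow_const fun _ => Or.inr hp0.le).aestronglyMeasurable ?_
      filter_upwards with x
      rw [Real.norm_eq_abs, abs_of_nonneg (by positivity)]
      exact hsub x
    refine ⟨hcd, hi, (integral_mono hi hint hsub).trans ?_⟩
    rw [integral_const_mul]
    have e1 : ∫ x, ((fun x => |iteratedDeriv n v x| ^ p) + fun x => |iteratedDeriv n v (x - a 0)| ^ p) x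
        = 2 * ∫ x, |iteratedDeriv n v x| ^ p := by
      rw [integral_add' ihi ihi2, integral_sub_right_eq_self (fun x => |iteratedDeriv n v x| ^ p)]
      ring
    rw [e1, Finset.prod_range_succ' _ (n+1), Real.mul_rpow (Finset.prod_nonneg fun i _ => (ha _).le) h0.le]
    calc _ ≤ 1 / a 0 ^ p * (2 * ((2 - c) * 2 ^ n * a' n / (∏ i ∈ Finset.range (n + 1), a' i) ^ p)) := by
          gcongr
      _ = _ := by
          simp only [ha', pow_succ]
          have : 0 < (∏ i ∈ Finset.range (n + 1), a (i+1)) ^ p :=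
            Real.rpow_pos_of_pos (Finset.prod_pos fun i _ => ha _) _
          have : 0 < a 0 ^ p := Real.rpow_pos_of_pos h0 _
          field_simp

/-- If `u` is the uniform limit of the `u_n` (a smooth function), then
`∫ |u^(n)|^p ≤ (2-c) · 2^n a_n / (a_0 ⋯ a_n)^p` for every `n`. -/
theorem pNorm_iteratedDeriv_of_infinite_convolution (c p : ℝ) (hc : c ∈ Set.Ioo (0:ℝ) 1)
    (hp : p ∈ Set.Ioo (0:ℝ) 1)
    (a : ℕ → ℝ) (ha : ∀ n, 0 < a n) (hmono : Antitone a) (hsum : Summable a)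
    (hsep : SepCond c a)
    (u : ℝ → ℝ) (hu : TendstoUniformly (fun n => uSeq a n) u Filter.atTop)
    (husmooth : ContDiff ℝ (⊤ : ℕ∞) u) (n : ℕ) :
    ∫ x : ℝ, |iteratedDeriv n u x| ^ p ≤
      (2 - c) * 2 ^ n * a n / (∏ i ∈ Finset.range (n + 1), a i) ^ p := by
  exact (main_aux c p hc hp n a ha hsum hsep u fun x => hu.tendsto_at x).2.2
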